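/- arXiv:2102.02921 — 2 statements merged into one kernel-verified Lean document; each statement's English description precedes it below -/
import Mathlib

section
/- If μ > 0 and ‖x̃₀ − x*‖₂ ≤ R, then for every N ≥ 0 the STM iterates with μ_τ = μ/2 (τ = 2) satisfy f(x_N) − f(x*) ≤ L R² exp(−(N/2)√(μ/(2L))) + (1 + √(2L/μ))(δ₂ + δ₃), where δ₂ = δ²/(2L_f), δ₃ = δ²/μ, and L = 2L_f. -/
open scoped RealInnerProductSpace

section STM

variable {E : Type*} [NormedAddCommGroup E] [InnerProductSpace ℝ E]

/-- Descent lemma on a convex set. -/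
theorem le_linear_add_of_lipschitz_gradient [CompleteSpace E] {Q : Set E} (hQ : Convex ℝ Q)
    {f : E → ℝ} {f' : E → E} {K : ℝ} (hgrad : ∀ v ∈ Q, HasGradientAt f (f' v) v)
    (hsmooth : ∀ v ∈ Q, ∀ w ∈ Q, ‖f' v - f' w‖ ≤ K * ‖v - w‖)
    {v w : E} (hv : v ∈ Q) (hw : w ∈ Q) :
    f w ≤ f v + ⟪f' v, w - v⟫ + K / 2 * ‖w - v‖ ^ 2 := by
  set d := w - v with hd
  have hmem : ∀ t ∈ Set.Icc (0 : ℝ) 1, v + t • d ∈ Q := fun t ht =>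
    hQ.add_smul_sub_mem hv hw ht
  have hderiv : ∀ t ∈ Set.Icc (0 : ℝ) 1,
      HasDerivAt (fun t : ℝ => f (v + t • d) - t * ⟪f' v, d⟫ - K / 2 * ‖d‖ ^ 2 * t ^ 2)
        (⟪f' (v + t • d), d⟫ - ⟪f' v, d⟫ - K * ‖d‖ ^ 2 * t) t := by
    intro t ht
    have hline : HasDerivAt (fun t : ℝ => v + t • d) d t := by
      simpa using ((hasDerivAt_id t).smul_const d).const_add v
    have hf := (hgrad _ (hmem t ht)).hasFDerivAt.comp_hasDerivAt t hline
    have hf' : HasDerivAt (fun t : ℝ => f (v + t • d)) ⟪f' (v + t • d), d⟫ t := by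
      simpa [Function.comp_def] using hf
    refine ((hf'.sub ((hasDerivAt_id t).mul_const ⟪f' v, d⟫)).sub
      ((hasDerivAt_pow 2 t).const_mul (K / 2 * ‖d‖ ^ 2))).congr_deriv ?_
    push_cast
    ring
  have hanti := antitoneOn_of_deriv_nonpos (convex_Icc (0 : ℝ) 1)
    (fun t ht => (hderiv t ht).continuousAt.continuousWithinAt)
    (fun t ht => (hderiv t (interior_subset ht)).differentiableAt.differentiableWithinAt)
    (fun t ht => by
      have ht' := interior_subset ht
      rw [(hderiv t ht').deriv, ← inner_sub_left]
      have hnorm := hsmooth _ (hmem t ht') v hv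
      rw [add_sub_cancel_left, norm_smul, Real.norm_of_nonneg ht'.1] at hnorm
      nlinarith [real_inner_le_norm (f' (v + t • d) - f' v) d,
        mul_le_mul_of_nonneg_right hnorm (norm_nonneg d)])
  have h := hanti (Set.left_mem_Icc.2 zero_le_one) (Set.right_mem_Icc.2 zero_le_one) zero_le_one
  have hvd : v + d = w := by rw [hd]; abel
  simp only [one_smul, zero_smul, add_zero, hvd] at h
  linarith

/-- Lower model bound for a `δ`-inexact gradient of a strongly convex function. -/
theorem inexact_lower_model {f : E → ℝ} {v w g gt : E} {μ δ : ℝ} (hμ : 0 < μ)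
    (hsc : f v + ⟪g, w - v⟫ + μ / 2 * ‖v - w‖ ^ 2 ≤ f w) (hgt : ‖gt - g‖ ≤ δ) :
    f v + ⟪gt, w - v⟫ + μ / 2 / 2 * ‖w - v‖ ^ 2 ≤ f w + δ ^ 2 / μ := by
  have hinner : ⟪gt, w - v⟫ - ⟪g, w - v⟫ ≤ δ * ‖w - v‖ := by
    rw [← inner_sub_left]
    exact (real_inner_le_norm _ _).trans (mul_le_mul_of_nonneg_right hgt (norm_nonneg _))
  rw [norm_sub_rev v w] at hsc
  have hyoung : 0 ≤ δ ^ 2 / μ - δ * ‖w - v‖ + μ / 4 * ‖w - v‖ ^ 2 := by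
    have : δ ^ 2 / μ - δ * ‖w - v‖ + μ / 4 * ‖w - v‖ ^ 2 = (δ - μ / 2 * ‖w - v‖) ^ 2 / μ := by
      field_simp
      ring
    rw [this]
    positivity
  linarith

/-- Upper model bound for a `δ`-inexact gradient of a smooth function. -/
theorem inexact_upper_model {f : E → ℝ} {v w g gt : E} {K δ : ℝ} (hK : 0 < K)
    (hub : f w ≤ f v + ⟪g, w - v⟫ + K / 2 * ‖w - v‖ ^ 2) (hgt : ‖gt - g‖ ≤ δ) :
    f w ≤ f v + ⟪gt, w - v⟫ + K * ‖w - v‖ ^ 2 + δ ^ 2 / (2 * K) := by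
  have hinner : ⟪g, w - v⟫ - ⟪gt, w - v⟫ ≤ δ * ‖w - v‖ := by
    rw [← inner_sub_left]
    rw [norm_sub_rev] at hgt
    exact (real_inner_le_norm _ _).trans (mul_le_mul_of_nonneg_right hgt (norm_nonneg _))
  have hyoung : 0 ≤ δ ^ 2 / (2 * K) - δ * ‖w - v‖ + K / 2 * ‖w - v‖ ^ 2 := by
    have : δ ^ 2 / (2 * K) - δ * ‖w - v‖ + K / 2 * ‖w - v‖ ^ 2
        = (δ - K * ‖w - v‖) ^ 2 / (2 * K) := by
      field_simp
      ring
    rw [this]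
    positivity
  linarith

/-- Quadratic growth at the minimizer over a convex set of a quadratic with Hessian `s • 1`. -/
theorem quadratic_growth_of_isMin {Q : Set E} (hQ : Convex ℝ Q) {h : E → ℝ} {c s : ℝ} {p : E}
    (hh : ∀ y, h y = c + ⟪p, y⟫ + s / 2 * ‖y‖ ^ 2)
    {y z : E} (hy : y ∈ Q) (hz : z ∈ Q) (hmin : ∀ y ∈ Q, h z ≤ h y) :
    h z + s / 2 * ‖y - z‖ ^ 2 ≤ h y := by
  set d := y - z with hd
  set G := ⟪p, d⟫ + s * ⟪z, d⟫ with hG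
  have hexp : ∀ t : ℝ, h (z + t • d) = h z + t * G + s / 2 * t ^ 2 * ‖d‖ ^ 2 := by
    intro t
    rw [hh, hh, norm_add_sq_real, inner_add_right, inner_smul_right, inner_smul_right, norm_smul,
      mul_pow, Real.norm_eq_abs, sq_abs]
    ring
  have hnonneg : ∀ t ∈ Set.Ioo (0 : ℝ) 1, 0 ≤ G + s / 2 * t * ‖d‖ ^ 2 := by
    intro t ht
    have := hmin _ (hQ.add_smul_sub_mem hz hy ⟨ht.1.le, ht.2.le⟩)
    rw [← hd, hexp] at this
    have ht0 : 0 ≤ t * (G + s / 2 * t * ‖d‖ ^ 2) := by linarith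
    exact nonneg_of_mul_nonneg_right ht0 ht.1
  have hG0 : 0 ≤ G := by
    have hcont : Filter.Tendsto (fun t : ℝ => G + s / 2 * t * ‖d‖ ^ 2) (nhdsWithin 0 (Set.Ioi 0))
        (nhds (G + s / 2 * 0 * ‖d‖ ^ 2)) :=
      (Continuous.tendsto (by fun_prop) 0).mono_left nhdsWithin_le_nhds
    have := ge_of_tendsto hcont
      (Filter.eventually_of_mem (Ioo_mem_nhdsGT zero_lt_one) hnonneg)
    simpa using this
  have h1 := hexp 1
  have hzd : z + (1 : ℝ) • d = y := by rw [one_smul, hd]; abel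
  rw [hzd] at h1
  linarith

/-- A quadratic with Hessian `s • 1` plus a weighted quadratic model is again such a quadratic. -/
theorem exists_quadratic_add_model {h : E → ℝ} {c s : ℝ} {p : E}
    (hh : ∀ y, h y = c + ⟪p, y⟫ + s / 2 * ‖y‖ ^ 2) (a b m : ℝ) (g v : E) :
    ∃ (c' : ℝ) (p' : E), ∀ y, h y + a * (b + ⟪g, y - v⟫ + m / 2 * ‖y - v‖ ^ 2)
      = c' + ⟪p', y⟫ + (s + m * a) / 2 * ‖y‖ ^ 2 := by
  refine ⟨c + a * (b - ⟪g, v⟫ + m / 2 * ‖v‖ ^ 2), p + a • g - (a * m) • v, fun y => ?_⟩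
  rw [hh, norm_sub_sq_real, inner_sub_right, inner_sub_left, inner_add_left,
    real_inner_smul_left, real_inner_smul_left, real_inner_comm y v]
  ring

/-- Smoothness and strong convexity constants are ordered as soon as the set has two points. -/
theorem strongConvexity_le_smoothness {Q : Set E} {f : E → ℝ} {f' : E → E} {K μ : ℝ}
    (hsmooth : ∀ v ∈ Q, ∀ w ∈ Q, ‖f' v - f' w‖ ≤ K * ‖v - w‖)
    (hsc : ∀ v ∈ Q, ∀ w ∈ Q, f v + ⟪f' v, w - v⟫ + μ / 2 * ‖v - w‖ ^ 2 ≤ f w)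
    {v w : E} (hv : v ∈ Q) (hw : w ∈ Q) (hne : v ≠ w) : μ ≤ K := by
  have hvw := hsc v hv w hw
  have hwv := hsc w hw v hv
  have hpos : 0 < ‖v - w‖ := norm_pos_iff.2 (sub_ne_zero.2 hne)
  have hmono : ⟪f' v - f' w, v - w⟫ = -⟪f' v, w - v⟫ - ⟪f' w, v - w⟫ := by
    rw [inner_sub_left, ← neg_sub v w, inner_neg_right]
    ring
  rw [norm_sub_rev w v] at hwv
  have hcs := (real_inner_le_norm (f' v - f' w) (v - w)).trans
    (mul_le_mul_of_nonneg_right (hsmooth v hv w hw) hpos.le)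
  have : μ * ‖v - w‖ ^ 2 ≤ K * ‖v - w‖ ^ 2 := by nlinarith
  exact le_of_mul_le_mul_right this (by positivity)

/-- Geometric growth of the step-size sums. -/
theorem stm_growth {L m a b q : ℝ} (hL : 0 < L) (hb : 0 < b) (ha : 0 < a)
    (hm : 0 ≤ m) (hq : q ^ 2 = m / L) (heq : (1 + m * a) * (a + b) = L * b ^ 2) :
    (1 + q) * a ≤ a + b := by
  have hm' : m = q ^ 2 * L := by rw [hq]; field_simp
  have hsq : L * (q * a) ^ 2 ≤ L * b ^ 2 := by
    rw [← heq]
    have : L * (q * a) ^ 2 = m * a * a := by rw [hm']; ring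
    rw [this]
    nlinarith [mul_nonneg (mul_nonneg hm ha.le) hb.le]
  have := le_of_abs_le (abs_le_of_sq_le_sq (le_of_mul_le_mul_left hsq hL) hb.le)
  linarith

theorem exp_half_le_one_add {q : ℝ} (hq0 : 0 ≤ q) (hq1 : q ≤ 1) : Real.exp (q / 2) ≤ 1 + q := by
  have h := Real.add_one_le_exp (-(q / 2))
  have hprod : Real.exp (q / 2) * Real.exp (-(q / 2)) = 1 := by
    rw [← Real.exp_add, add_neg_cancel, Real.exp_zero]
  nlinarith [Real.exp_pos (q / 2), Real.exp_pos (-(q / 2)),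
    mul_le_mul_of_nonneg_left h (Real.exp_pos (q / 2)).le]

/-- One step of the estimating-sequence inequality. -/
theorem stm_step {f : E → ℝ} {L m a b ε₂ ε₃ e r r' c : ℝ} {x xt x' z z' g : E}
    (ha : 0 < a) (hb : 0 < b) (heq : (1 + m * a) * (a + b) = L * b ^ 2) (hm : 0 ≤ m)
    (hxt : xt = (a + b)⁻¹ • (a • x + b • z)) (hx' : x' = (a + b)⁻¹ • (a • x + b • z'))
    (hlow : f xt + ⟪g, x - xt⟫ + m / 2 * ‖x - xt‖ ^ 2 ≤ f x + ε₃)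
    (hup : f x' ≤ f xt + ⟪g, x' - xt⟫ + L / 2 * ‖x' - xt‖ ^ 2 + ε₂)
    (hinv : a * f x ≤ r + e) (hgrow : r + (1 + m * a) / 2 * ‖z' - z‖ ^ 2 ≤ c)
    (hr' : r' = c + b * (f xt + ⟪g, z' - xt⟫ + m / 2 * ‖z' - xt‖ ^ 2)) :
    (a + b) * f x' ≤ r' + (e + (a + b) * ε₂ + a * ε₃) := by
  have hab : 0 < a + b := by linarith
  have hdiff : (a + b) • (x' - xt) = b • (z' - z) := by
    rw [hxt, hx', ← smul_sub, smul_smul, mul_inv_cancel₀ hab.ne', one_smul, add_sub_add_left_eq_sub,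
      smul_sub]
  have hcomb : (a + b) • (x' - xt) = a • (x - xt) + b • (z' - xt) := by
    have : (a + b) • x' = a • x + b • z' := by
      rw [hx', smul_smul, mul_inv_cancel₀ hab.ne', one_smul]
    rw [smul_sub, this, add_smul]
    module
  have hnorm : (a + b) ^ 2 * ‖x' - xt‖ ^ 2 = b ^ 2 * ‖z' - z‖ ^ 2 := by
    have := congrArg (fun v => ‖v‖ ^ 2) hdiff
    simpa only [norm_smul, mul_pow, Real.norm_eq_abs, sq_abs] using this
  have hinner : (a + b) * ⟪g, x' - xt⟫ = a * ⟪g, x - xt⟫ + b * ⟪g, z' - xt⟫ := by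
    have := congrArg (fun v => ⟪g, v⟫) hcomb
    simpa only [inner_add_right, inner_smul_right] using this
  have hquad : (1 + m * a) * ‖z' - z‖ ^ 2 = (a + b) * (L * ‖x' - xt‖ ^ 2) := by
    apply mul_left_cancel₀ hab.ne'
    linear_combination ‖z' - z‖ ^ 2 * heq - L * hnorm
  have hup' := mul_le_mul_of_nonneg_left hup hab.le
  have hlow' := mul_le_mul_of_nonneg_left hlow ha.le
  have h1 : 0 ≤ a * (m / 2 * ‖x - xt‖ ^ 2) := by positivity
  have h2 : 0 ≤ b * (m / 2 * ‖z' - xt‖ ^ 2) := by positivity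
  rw [hr']
  linarith

end STM

/-- Theorem 4.7, second bound (`τ = 2`, `μ_τ = μ/2`, `μ > 0`):
`f(x_N) − f(x*) ≤ L R² exp(−(N/2)√(μ/(2L))) + (1 + √(2L/μ))(δ₂ + δ₃)`,
with `L = 2 L_f`, `δ₂ = δ²/(2 L_f)`, `δ₃ = δ²/μ`. -/
theorem stmt_12 {n : ℕ} (Q : Set (EuclideanSpace ℝ (Fin n)))
    (hQclosed : IsClosed Q) (hQconvex : Convex ℝ Q)
    (f : EuclideanSpace ℝ (Fin n) → ℝ)
    (f' gt : EuclideanSpace ℝ (Fin n) → EuclideanSpace ℝ (Fin n))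
    (Lf μ δ R : ℝ) (hLf : 0 < Lf) (hμ : 0 < μ) (hδ : 0 ≤ δ)
    (hgrad : ∀ v ∈ Q, HasGradientAt f (f' v) v)
    (hsmooth : ∀ v ∈ Q, ∀ w ∈ Q, ‖f' v - f' w‖ ≤ Lf * ‖v - w‖)
    (hsc : ∀ v ∈ Q, ∀ w ∈ Q,
      f v + ⟪f' v, w - v⟫ + μ / 2 * ‖v - w‖ ^ 2 ≤ f w)
    (horacle : ∀ v ∈ Q, ‖gt v - f' v‖ ≤ δ)
    (xstar : EuclideanSpace ℝ (Fin n)) (hxstarQ : xstar ∈ Q)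
    (hxstar : ∀ y ∈ Q, f xstar ≤ f y)
    (α A : ℕ → ℝ) (xt x z : ℕ → EuclideanSpace ℝ (Fin n))
    (ψ : ℕ → EuclideanSpace ℝ (Fin n) → ℝ)
    (hxt0 : xt 0 ∈ Q) (hR : ‖xt 0 - xstar‖ ≤ R)
    (hα0 : α 0 = 1 / (2 * Lf)) (hA0 : A 0 = 1 / (2 * Lf))
    (hψ0 : ∀ y, ψ 0 y = 1 / 2 * ‖y - xt 0‖ ^ 2 +
      α 0 * (f (xt 0) + ⟪gt (xt 0), y - xt 0⟫ + μ / 2 / 2 * ‖y - xt 0‖ ^ 2))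
    (hzmem : ∀ k, z k ∈ Q) (hzmin : ∀ k, ∀ y ∈ Q, ψ k (z k) ≤ ψ k y)
    (hx0 : x 0 = z 0)
    (hαpos : ∀ k, 0 < α (k + 1))
    (hαeq : ∀ k, (1 + μ / 2 * A k) * (A k + α (k + 1)) = 2 * Lf * α (k + 1) ^ 2)
    (hA : ∀ k, A (k + 1) = A k + α (k + 1))
    (hxt : ∀ k, xt (k + 1) = (A (k + 1))⁻¹ • (A k • x k + α (k + 1) • z k))
    (hψ : ∀ k y, ψ (k + 1) y = ψ k y + α (k + 1) *
      (f (xt (k + 1)) + ⟪gt (xt (k + 1)), y - xt (k + 1)⟫ +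
        μ / 2 / 2 * ‖y - xt (k + 1)‖ ^ 2))
    (hx : ∀ k, x (k + 1) = (A (k + 1))⁻¹ • (A k • x k + α (k + 1) • z (k + 1))) :
    ∀ N : ℕ, f (x N) - f xstar ≤
      2 * Lf * R ^ 2 *
        Real.exp (-((N : ℝ) / 2) * Real.sqrt (μ / (2 * (2 * Lf)))) +
      (1 + Real.sqrt (2 * (2 * Lf) / μ)) * (δ ^ 2 / (2 * Lf) + δ ^ 2 / μ) := by
  have hxQ_of : ∀ {a b : ℝ} {u v : EuclideanSpace ℝ (Fin n)}, 0 < a → 0 < b → u ∈ Q → v ∈ Q →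
      (a + b)⁻¹ • (a • u + b • v) ∈ Q := by
    intro a b u v ha hb hu hv
    have hab : 0 < a + b := add_pos ha hb
    rw [smul_add, smul_smul, smul_smul]
    exact hQconvex hu hv (by positivity) (by positivity) (by field_simp)
  have hApos : ∀ k, 0 < A k := by
    intro k
    induction k with
    | zero => rw [hA0]; positivity
    | succ k ih => rw [hA]; exact add_pos ih (hαpos k)
  have hxQ : ∀ k, x k ∈ Q := by
    intro k
    induction k with
    | zero => rw [hx0]; exact hzmem 0
    | succ k ih => rw [hx, hA]; exact hxQ_of (hApos k) (hαpos k) ih (hzmem _)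
  have hxtQ : ∀ k, xt k ∈ Q := by
    intro k
    cases k with
    | zero => exact hxt0
    | succ k => rw [hxt, hA]; exact hxQ_of (hApos k) (hαpos k) (hxQ k) (hzmem k)
  set ε₂ := δ ^ 2 / (2 * Lf)
  set ε₃ := δ ^ 2 / μ
  have hε₂0 : 0 ≤ ε₂ := by positivity
  have hε₃0 : 0 ≤ ε₃ := by positivity
  have hlow : ∀ v ∈ Q, ∀ w ∈ Q,
      f v + ⟪gt v, w - v⟫ + μ / 2 / 2 * ‖w - v‖ ^ 2 ≤ f w + ε₃ := fun v hv w hw =>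
    inexact_lower_model hμ (hsc v hv w hw) (horacle v hv)
  have hup : ∀ v ∈ Q, ∀ w ∈ Q,
      f w ≤ f v + ⟪gt v, w - v⟫ + 2 * Lf / 2 * ‖w - v‖ ^ 2 + ε₂ := by
    intro v hv w hw
    have := inexact_upper_model hLf
      (le_linear_add_of_lipschitz_gradient hQconvex hgrad hsmooth hv hw) (horacle v hv)
    linarith
  have hquad : ∀ k, ∃ (c : ℝ) (p : EuclideanSpace ℝ (Fin n)),
      ∀ y, ψ k y = c + ⟪p, y⟫ + (1 + μ / 2 * A k) / 2 * ‖y‖ ^ 2 := by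
    intro k
    induction k with
    | zero =>
      have hbase : ∀ y, 1 / 2 * ‖y - xt 0‖ ^ 2
          = 1 / 2 * ‖xt 0‖ ^ 2 + ⟪-xt 0, y⟫ + 1 / 2 * ‖y‖ ^ 2 := by
        intro y
        rw [norm_sub_sq_real, inner_neg_left, real_inner_comm]
        ring
      obtain ⟨c, p, h⟩ := exists_quadratic_add_model hbase (α 0) (f (xt 0)) (μ / 2) (gt (xt 0))
        (xt 0)
      refine ⟨c, p, fun y => ?_⟩
      rw [hψ0, h, hα0, hA0]
    | succ k ih =>
      obtain ⟨c, p, h⟩ := ih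
      obtain ⟨c', p', h'⟩ := exists_quadratic_add_model h (α (k + 1)) (f (xt (k + 1))) (μ / 2)
        (gt (xt (k + 1))) (xt (k + 1))
      refine ⟨c', p', fun y => ?_⟩
      rw [hψ, h', hA]
      ring
  have hestimate : ∀ k, A k * f (x k) ≤
      ψ k (z k) + ((ε₂ + ε₃) * ∑ j ∈ Finset.range (k + 1), A j - A k * ε₃) := by
    intro k
    induction k with
    | zero =>
      have h := mul_le_mul_of_nonneg_left (hup _ hxt0 _ (hzmem 0)) (hApos 0).le
      have hcoef : A 0 * (2 * Lf / 2 * ‖z 0 - xt 0‖ ^ 2) = 1 / 2 * ‖z 0 - xt 0‖ ^ 2 := by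
        rw [hA0]; field_simp
      have hnn : 0 ≤ A 0 * (μ / 2 / 2 * ‖z 0 - xt 0‖ ^ 2) :=
        mul_nonneg (hApos 0).le (by positivity)
      rw [hψ0, hx0, hα0, ← hA0, zero_add, Finset.sum_range_one]
      linarith
    | succ k ih =>
      obtain ⟨c, p, h⟩ := hquad k
      have hstep := stm_step (hApos k) (hαpos k) (hαeq k) (by positivity)
        (by rw [hxt, hA]) (by rw [hx, hA])
        (hlow _ (hxtQ (k + 1)) _ (hxQ k)) (hup _ (hxtQ (k + 1)) _ (hxQ (k + 1))) ih
        (quadratic_growth_of_isMin hQconvex h (hzmem (k + 1)) (hzmem k) (hzmin k))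
        (hψ k (z (k + 1)))
      rw [← hA] at hstep
      rw [Finset.sum_range_succ]
      linarith
  have hψstar : ∀ k, ψ k xstar ≤ 1 / 2 * R ^ 2 + A k * (f xstar + ε₃) := by
    intro k
    induction k with
    | zero =>
      have h := mul_le_mul_of_nonneg_left (hlow _ hxt0 _ hxstarQ) (hApos 0).le
      have hR2 : ‖xstar - xt 0‖ ^ 2 ≤ R ^ 2 := by
        rw [norm_sub_rev]
        exact pow_le_pow_left₀ (norm_nonneg _) hR 2
      rw [hψ0, hα0, ← hA0]
      linarith
    | succ k ih =>
      have h := mul_le_mul_of_nonneg_left (hlow _ (hxtQ (k + 1)) _ hxstarQ) (hαpos k).le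
      rw [hψ, hA]
      linarith
  set q := Real.sqrt (μ / (2 * (2 * Lf))) with hq
  have hqpos : 0 < q := Real.sqrt_pos.2 (by positivity)
  have hqsq : q ^ 2 = μ / 2 / (2 * Lf) := by
    rw [hq, Real.sq_sqrt (by positivity), div_div]
  have hqinv : Real.sqrt (2 * (2 * Lf) / μ) = q⁻¹ := by
    rw [hq, ← Real.sqrt_inv, inv_div]
  have hgrowth : ∀ k, (1 + q) * A k ≤ A (k + 1) := by
    intro k
    rw [hA]
    exact stm_growth (by positivity) (hαpos k) (hApos k) (by positivity) hqsq (hαeq k)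
  have hsum : ∀ k, ∑ j ∈ Finset.range (k + 1), A j ≤ (1 + q⁻¹) * A k := by
    intro k
    induction k with
    | zero =>
      rw [zero_add, Finset.sum_range_one]
      nlinarith [mul_pos (inv_pos.2 hqpos) (hApos 0)]
    | succ k ih =>
      rw [Finset.sum_range_succ]
      have h := mul_le_mul_of_nonneg_left (hgrowth k) (inv_pos.2 hqpos).le
      have hcancel : q⁻¹ * ((1 + q) * A k) = (1 + q⁻¹) * A k := by field_simp; ring
      linarith
  intro N
  rw [hqinv]
  by_cases hne : x N = xstar
  · rw [hne, sub_self]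
    positivity
  have hμL : μ ≤ Lf := strongConvexity_le_smoothness hsmooth hsc (hxQ N) hxstarQ hne
  have hq1 : q ≤ 1 := by
    rw [hq, Real.sqrt_le_one, div_le_one (by positivity)]
    linarith
  have hAexp : ∀ k : ℕ, 1 ≤ 2 * Lf * A k * Real.exp (-((k : ℝ) / 2) * q) := by
    intro k
    induction k with
    | zero => simp [hA0, mul_inv_cancel₀ (mul_pos two_pos hLf).ne', -mul_inv_rev]
    | succ k ih =>
      have hsplit : Real.exp (-((k : ℝ) / 2) * q)
          = Real.exp (q / 2) * Real.exp (-(((k + 1 : ℕ) : ℝ) / 2) * q) := by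
        rw [← Real.exp_add]
        congr 1
        push_cast
        ring
      have hstep : Real.exp (q / 2) * A k ≤ A (k + 1) :=
        (mul_le_mul_of_nonneg_right (exp_half_le_one_add hqpos.le hq1) (hApos k).le).trans
          (hgrowth k)
      calc 1 ≤ 2 * Lf * A k * Real.exp (-((k : ℝ) / 2) * q) := ih
        _ = 2 * Lf * (Real.exp (q / 2) * A k) * Real.exp (-(((k + 1 : ℕ) : ℝ) / 2) * q) := by
          rw [hsplit]; ring
        _ ≤ _ := by gcongr
  have hmain : A N * (f (x N) - f xstar) ≤
      1 / 2 * R ^ 2 + (ε₂ + ε₃) * ((1 + q⁻¹) * A N) := by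
    have h := mul_le_mul_of_nonneg_left (hsum N) (add_nonneg hε₂0 hε₃0)
    linarith [hestimate N, hψstar N, hzmin N xstar hxstarQ]
  refine le_of_mul_le_mul_left (hmain.trans ?_) (hApos N)
  have h := mul_le_mul_of_nonneg_right (hAexp N) (sq_nonneg R)
  nlinarith [sq_nonneg R]
end

section
/- In the composite setting, for every k ≥ 0 the modified estimating functions satisfy ψ_{k+1}(z_{k+1}) ≥ ψ_k(z_k) + ((1 + μ_τ A_k)/2)‖z_k − z_{k+1}‖₂² + α_{k+1}(𝓛(x̃_{k+1}) + ⟨g̃(x̃_{k+1}), z_{k+1} − x̃_{k+1}⟩ + (μ_τ/2)‖z_{k+1} − x̃_{k+1}‖₂² + r(z_{k+1})). -/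
open scoped RealInnerProductSpace

/-- A minimizer of a strongly convex function enjoys quadratic growth. -/
theorem StrongConvexOn.add_sq_norm_sub_le_of_isMinOn {E : Type*} [NormedAddCommGroup E]
    [NormedSpace ℝ E] {s : Set E} {m : ℝ} {f : E → ℝ} (hf : StrongConvexOn s m f)
    {z y : E} (hz : z ∈ s) (hy : y ∈ s) (hmin : IsMinOn f s z) :
    f z + m / 2 * ‖z - y‖ ^ 2 ≤ f y := by
  have key : ∀ t ∈ Set.Ioo (0 : ℝ) 1, f z + (1 - t) * (m / 2 * ‖z - y‖ ^ 2) ≤ f y := by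
    rintro t ⟨ht0, ht1⟩
    have h₁ := hf.2 hz hy (sub_nonneg.2 ht1.le) ht0.le (sub_add_cancel 1 t)
    have h₂ := isMinOn_iff.1 hmin _
      (hf.1 hz hy (sub_nonneg.2 ht1.le) ht0.le (sub_add_cancel 1 t))
    simp only [smul_eq_mul] at h₁
    refine le_of_mul_le_mul_left ?_ ht0
    linarith
  have hlim : Filter.Tendsto (fun t : ℝ => f z + (1 - t) * (m / 2 * ‖z - y‖ ^ 2))
      (nhdsWithin 0 (Set.Ioi 0)) (nhds (f z + (1 - 0) * (m / 2 * ‖z - y‖ ^ 2))) :=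
    (Continuous.tendsto (by fun_prop) 0).mono_left nhdsWithin_le_nhds
  rw [sub_zero, one_mul] at hlim
  refine le_of_tendsto hlim ?_
  filter_upwards [Ioo_mem_nhdsGT zero_lt_one] with t ht using key t ht

section InnerProductSpace

variable {E : Type*} [NormedAddCommGroup E] [InnerProductSpace ℝ E]

theorem norm_sq_convex_combination_sub (x y p : E) {a b : ℝ} (hab : a + b = 1) :
    ‖a • x + b • y - p‖ ^ 2 =
      a * ‖x - p‖ ^ 2 + b * ‖y - p‖ ^ 2 - a * b * ‖x - y‖ ^ 2 := by
  obtain rfl : b = 1 - a := by linarith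
  have h₁ : a • x + (1 - a) • y - p = a • (x - p) + (1 - a) • (y - p) := by module
  have h₂ : x - y = (x - p) - (y - p) := by abel
  rw [h₁, h₂, norm_add_sq_real, norm_sub_sq_real (x - p), norm_smul, norm_smul,
    real_inner_smul_left, real_inner_smul_right, mul_pow, mul_pow, Real.norm_eq_abs,
    Real.norm_eq_abs, sq_abs, sq_abs]
  ring

/-- A quadratic `m / 2 * ‖· - p‖ ^ 2` is `m`-strongly convex. -/
theorem strongConvexOn_sq_norm_sub (m : ℝ) (p : E) {s : Set E} (hs : Convex ℝ s) :
    StrongConvexOn s m fun y => m / 2 * ‖y - p‖ ^ 2 := by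
  refine ⟨hs, fun x _ y _ a b _ _ hab => le_of_eq ?_⟩
  simp only [smul_eq_mul]
  rw [norm_sq_convex_combination_sub x y p hab]
  ring

theorem StrongConvexOn.add_const_mul {s : Set E} {m μ c : ℝ} {f h : E → ℝ}
    (hf : StrongConvexOn s m f) (hh : StrongConvexOn s μ h) (hc : 0 ≤ c) :
    StrongConvexOn s (m + μ * c) fun y => f y + c * h y := by
  refine ⟨hf.1, fun x hx y hy a b ha hb hab => ?_⟩
  have h₁ := hf.2 hx hy ha hb hab
  have h₂ := mul_le_mul_of_nonneg_left (hh.2 hx hy ha hb hab) hc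
  simp only [smul_eq_mul] at h₁ h₂ ⊢
  linarith

/-- The quadratic model of a composite objective at `p` is strongly convex. -/
theorem strongConvexOn_composite_model {s : Set E} {r : E → ℝ} (hr : ConvexOn ℝ s r)
    (c μ : ℝ) (g p : E) :
    StrongConvexOn s μ fun y => c + ⟪g, y - p⟫ + μ / 2 * ‖y - p‖ ^ 2 + r y := by
  refine ⟨hr.1, fun x hx y hy a b ha hb hab => ?_⟩
  have h₁ := (strongConvexOn_sq_norm_sub μ p hr.1).2 hx hy ha hb hab
  have h₂ := hr.2 hx hy ha hb hab
  have h₃ : c + ⟪g, a • x + b • y - p⟫ = a * (c + ⟪g, x - p⟫) + b * (c + ⟪g, y - p⟫) := by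
    obtain rfl : b = 1 - a := by linarith
    simp only [inner_sub_right, inner_add_right, real_inner_smul_right]
    ring
  simp only [smul_eq_mul] at h₁ h₂ ⊢
  linarith

end InnerProductSpace

/-- Lemma 6.4: key inequality for the modified estimating functions in the
composite setting. -/
theorem stmt_17 {n : ℕ} (Q : Set (EuclideanSpace ℝ (Fin n)))
    (hQclosed : IsClosed Q) (hQconvex : Convex ℝ Q)
    (Lc r : EuclideanSpace ℝ (Fin n) → ℝ)
    (hr : ConvexOn ℝ Set.univ r)
    (gt : EuclideanSpace ℝ (Fin n) → EuclideanSpace ℝ (Fin n))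
    (μτ L : ℝ) (hμτ : 0 ≤ μτ) (hL : 0 < L)
    (α A : ℕ → ℝ) (xt x z : ℕ → EuclideanSpace ℝ (Fin n))
    (ψ : ℕ → EuclideanSpace ℝ (Fin n) → ℝ)
    (hxt0 : xt 0 ∈ Q) (hα0 : α 0 = 1 / L) (hA0 : A 0 = 1 / L)
    (hψ0 : ∀ y, ψ 0 y = 1 / 2 * ‖y - xt 0‖ ^ 2 +
      α 0 * (Lc (xt 0) + ⟪gt (xt 0), y - xt 0⟫ + μτ / 2 * ‖y - xt 0‖ ^ 2 + r y))
    (hzmem : ∀ k, z k ∈ Q) (hzmin : ∀ k, ∀ y ∈ Q, ψ k (z k) ≤ ψ k y)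
    (hx0 : x 0 = z 0)
    (hαpos : ∀ k, 0 < α (k + 1))
    (hαeq : ∀ k, (1 + μτ * A k) * (A k + α (k + 1)) = L * α (k + 1) ^ 2)
    (hA : ∀ k, A (k + 1) = A k + α (k + 1))
    (hxt : ∀ k, xt (k + 1) = (A (k + 1))⁻¹ • (A k • x k + α (k + 1) • z k))
    (hψ : ∀ k y, ψ (k + 1) y = ψ k y + α (k + 1) *
      (Lc (xt (k + 1)) + ⟪gt (xt (k + 1)), y - xt (k + 1)⟫ +
        μτ / 2 * ‖y - xt (k + 1)‖ ^ 2 + r y))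
    (hx : ∀ k, x (k + 1) = (A (k + 1))⁻¹ • (A k • x k + α (k + 1) • z (k + 1))) :
    ∀ k : ℕ,
      ψ k (z k) + (1 + μτ * A k) / 2 * ‖z k - z (k + 1)‖ ^ 2 +
        α (k + 1) * (Lc (xt (k + 1)) + ⟪gt (xt (k + 1)), z (k + 1) - xt (k + 1)⟫ +
          μτ / 2 * ‖z (k + 1) - xt (k + 1)‖ ^ 2 + r (z (k + 1))) ≤
        ψ (k + 1) (z (k + 1)) := by
  have hrQ : ConvexOn ℝ Q r := hr.subset (Set.subset_univ Q) hQconvex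
  have hαnonneg : ∀ k, 0 ≤ α k := by
    rintro (_ | k)
    · rw [hα0]; positivity
    · exact (hαpos k).le
  have hstrong : ∀ k, StrongConvexOn Q (1 + μτ * A k) (ψ k) := by
    intro k
    induction k with
    | zero =>
      have h := (strongConvexOn_sq_norm_sub 1 (xt 0) hQconvex).add_const_mul
        (strongConvexOn_composite_model hrQ (Lc (xt 0)) μτ (gt (xt 0)) (xt 0)) (hαnonneg 0)
      rw [funext hψ0, hA0, ← hα0]
      exact h
    | succ k ih =>
      have h := ih.add_const_mul (strongConvexOn_composite_model hrQ (Lc (xt (k + 1))) μτ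
        (gt (xt (k + 1))) (xt (k + 1))) (hαnonneg (k + 1))
      rw [funext (hψ k), hA, mul_add, ← add_assoc]
      exact h
  intro k
  rw [hψ]
  gcongr
  exact (hstrong k).add_sq_norm_sub_le_of_isMinOn (hzmem k) (hzmem (k + 1))
    (isMinOn_iff.2 (hzmin k))
end
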